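/- Let G be a graph, let A, A' be subsets of V(G), let P be a partition of A and P' a partition of A', and suppose d(A,A') ≠ 0. Then H(P,P') − H({A},{A'}) ≥ (1/2) · d(A,A') · ( Σ_{V ∈ P, V' ∈ P'} (|V||V'|/(|A||A'|)) · |d(V,V')/d(A,A') − 1| )². -/

import Mathlib

/-!
Put `d = d(A,A')`, weights `w = |W||W'|/(|A||A'|)` and ratios `x = d(W,W')/d`. The weights sum to
`1`, and since edges are counted exactly once over the pairs of parts, so do the products `w * x`.
As `x ↦ x log x` satisfies `H(d x) = x H(d) + d H(x)`, the gain in potential is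
`d * ∑ w * x * log x`, and the claim becomes Pinsker's inequality
`(∑ w * |x - 1|) ^ 2 ≤ 2 * ∑ w * x * log x` (`pinsker_weighted`).

Pinsker's inequality follows from the pointwise bound
`(x - 1) ^ 2 ≤ ((2 * x + 4) / 3) * (x * log x - x + 1)` (`sq_sub_one_le`) by Cauchy–Schwarz, because
`∑ w * (2 * x + 4) / 3 = 2` and `∑ w * (x * log x - x + 1) = ∑ w * x * log x`.
-/

open Finset
open scoped Classical

/-- `eCnt G A B` is the number of ordered pairs `(u,v) ∈ A × B` with `uv` an edge of `G`. -/
noncomputable def eCnt {V : Type*} [Fintype V] (G : SimpleGraph V) (A B : Finset V) : ℕ :=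
  ((A ×ˢ B).filter fun p => G.Adj p.1 p.2).card

/-- The edge density `d(A,B)` between vertex subsets `A` and `B`. -/
noncomputable def dens {V : Type*} [Fintype V] (G : SimpleGraph V) (A B : Finset V) : ℝ :=
  eCnt G A B / (A.card * B.card)

/-- The function `H(x) = x ln x` (with `0 ln 0 = 0`, which holds for `Real.log`). -/
noncomputable def Hent (x : ℝ) : ℝ := x * Real.log x

/-- The entropy potential `H(P,P')` of a partition `P` of `A ⊆ V(G)` and a partition `P'`
of `A' ⊆ V(G)`: `H(P,P') = Σ_{W ∈ P, W' ∈ P'} (|W||W'|/(|A||A'|))·H(d(W,W'))`. -/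
noncomputable def pot {V : Type*} [Fintype V] [DecidableEq V] (G : SimpleGraph V)
    {A A' : Finset V} (P : Finpartition A) (P' : Finpartition A') : ℝ :=
  ∑ W ∈ P.parts, ∑ W' ∈ P'.parts,
    ((W.card : ℝ) * W'.card / ((A.card : ℝ) * A'.card)) * Hent (dens G W W')

/-- The difference of the two sides has derivative `(x - 1) ^ 3 / (x ^ 2 * (x + 2) ^ 2)`, so it is
minimal at `x = 1`, where it vanishes. -/
lemma rational_le_log {x : ℝ} (hx : 0 < x) :
    (x - 1) * (5 * x + 1) / (2 * x * (x + 2)) ≤ Real.log x := by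
  set h : ℝ → ℝ := fun y => Real.log y - (y - 1) * (5 * y + 1) / (2 * y * (y + 2)) with hh
  have hder : ∀ y : ℝ, 0 < y → HasDerivAt h ((y - 1) ^ 3 / (y ^ 2 * (y + 2) ^ 2)) y := by
    intro y hy
    have hnum : HasDerivAt (fun y : ℝ => (y - 1) * (5 * y + 1))
        (1 * (5 * y + 1) + (y - 1) * (5 * 1)) y :=
      ((hasDerivAt_id y).sub_const 1).mul (((hasDerivAt_id y).const_mul 5).add_const 1)
    have hden : HasDerivAt (fun y : ℝ => 2 * y * (y + 2)) (2 * 1 * (y + 2) + 2 * y * 1) y :=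
      ((hasDerivAt_id y).const_mul 2).mul ((hasDerivAt_id y).add_const 2)
    have hne : 2 * y * (y + 2) ≠ 0 := by positivity
    refine ((Real.hasDerivAt_log hy.ne').sub (hnum.div hden hne)).congr_deriv ?_
    field_simp
    ring
  have h1 : h 1 = 0 := by simp [hh]
  have hcont : ∀ s : Set ℝ, (∀ y ∈ s, 0 < y) → ContinuousOn h s := fun s hs y hy =>
    (hder y (hs y hy)).continuousAt.continuousWithinAt
  have key : h 1 ≤ h x := by
    rcases le_total x 1 with hx1 | hx1
    · have hanti : AntitoneOn h (Set.Icc x 1) := by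
        refine antitoneOn_of_deriv_nonpos (convex_Icc x 1)
          (hcont _ fun y hy => hx.trans_le hy.1) ?_ ?_
        · intro y hy
          rw [interior_Icc] at hy
          exact (hder y (hx.trans hy.1)).differentiableAt.differentiableWithinAt
        · intro y hy
          rw [interior_Icc] at hy
          rw [(hder y (hx.trans hy.1)).deriv]
          exact div_nonpos_of_nonpos_of_nonneg
            (Odd.pow_nonpos (by decide) (by linarith [hy.2])) (by positivity)
      exact hanti ⟨le_rfl, hx1⟩ ⟨hx1, le_rfl⟩ hx1
    · have hmono : MonotoneOn h (Set.Icc 1 x) := by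
        refine monotoneOn_of_deriv_nonneg (convex_Icc 1 x)
          (hcont _ fun y hy => one_pos.trans_le hy.1) ?_ ?_
        · intro y hy
          rw [interior_Icc] at hy
          exact (hder y (one_pos.trans hy.1)).differentiableAt.differentiableWithinAt
        · intro y hy
          rw [interior_Icc] at hy
          rw [(hder y (one_pos.trans hy.1)).deriv]
          have : 0 ≤ y - 1 := by linarith [hy.1]
          positivity
      exact hmono ⟨le_rfl, hx1⟩ ⟨hx1, le_rfl⟩ hx1
  rw [h1] at key
  exact sub_nonneg.mp key

lemma sq_sub_one_le {x : ℝ} (hx : 0 ≤ x) :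
    (x - 1) ^ 2 ≤ ((2 * x + 4) / 3) * (x * Real.log x - x + 1) := by
  rcases hx.eq_or_lt with rfl | hx
  · norm_num
  · have h := rational_le_log hx
    rw [div_le_iff₀ (by positivity)] at h
    nlinarith

/-- Pinsker's inequality for a finite distribution `w` and the relative density `x` of a second
distribution with respect to it. -/
lemma pinsker_weighted {ι : Type*} (s : Finset ι) (w x : ι → ℝ) (hw : ∀ i ∈ s, 0 ≤ w i)
    (hx : ∀ i ∈ s, 0 ≤ x i) (hw1 : ∑ i ∈ s, w i = 1) (hwx : ∑ i ∈ s, w i * x i = 1) :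
    (∑ i ∈ s, w i * |x i - 1|) ^ 2 ≤ 2 * ∑ i ∈ s, w i * (x i * Real.log (x i)) := by
  have hkl : ∀ i ∈ s, 0 ≤ x i * Real.log (x i) - x i + 1 := fun i hi => by
    have := InformationTheory.klFun_nonneg (hx i hi)
    rw [InformationTheory.klFun_apply] at this
    linarith
  have hcs := Finset.sum_sq_le_sum_mul_sum_of_sq_le_mul s (r := fun i => w i * |x i - 1|)
    (f := fun i => w i * ((2 * x i + 4) / 3))
    (g := fun i => w i * (x i * Real.log (x i) - x i + 1))
    (fun i hi => mul_nonneg (hw i hi) (by linarith [hx i hi]))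
    (fun i hi => mul_nonneg (hw i hi) (hkl i hi))
    (fun i hi => by
      have := mul_le_mul_of_nonneg_left (sq_sub_one_le (hx i hi)) (sq_nonneg (w i))
      rw [mul_pow, sq_abs]
      linarith)
  have hf : ∑ i ∈ s, w i * ((2 * x i + 4) / 3) = 2 := by
    have : ∀ i ∈ s, w i * ((2 * x i + 4) / 3) = 2 / 3 * (w i * x i) + 4 / 3 * w i :=
      fun i _ => by ring
    rw [Finset.sum_congr rfl this, Finset.sum_add_distrib, ← Finset.mul_sum, ← Finset.mul_sum,
      hw1, hwx]
    norm_num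
  have hg : ∑ i ∈ s, w i * (x i * Real.log (x i) - x i + 1) =
      ∑ i ∈ s, w i * (x i * Real.log (x i)) := by
    have : ∀ i ∈ s, w i * (x i * Real.log (x i) - x i + 1) =
        w i * (x i * Real.log (x i)) - w i * x i + w i := fun i _ => by ring
    rw [Finset.sum_congr rfl this, Finset.sum_add_distrib, Finset.sum_sub_distrib, hw1, hwx]
    ring
  rwa [hf, hg] at hcs

lemma eCnt_finpartition {V : Type*} [Fintype V] [DecidableEq V] (G : SimpleGraph V)
    {A A' : Finset V} (P : Finpartition A) (P' : Finpartition A') :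
    eCnt G A A' = ∑ q ∈ P.parts ×ˢ P'.parts, eCnt G q.1 q.2 := by
  have h := Rel.card_interedges_finpartition G.Adj P P'
  exact h

lemma dens_nonneg {V : Type*} [Fintype V] (G : SimpleGraph V) (A B : Finset V) :
    0 ≤ dens G A B := by
  unfold _root_.dens
  positivity

lemma Hent_mul {a b : ℝ} (ha : a ≠ 0) : Hent (a * b) = b * Hent a + a * (b * Real.log b) := by
  unfold Hent
  rcases eq_or_ne b 0 with rfl | hb
  · simp
  · rw [Real.log_mul ha hb]
    ring

/-- **Uniform defect inequality for the potential (Corollary 3.3).**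
If `P` is a partition of `A`, `P'` is a partition of `A'` and `d(A,A') ≠ 0`, then
`H(P,P') − H({A},{A'}) ≥ (1/2)·d(A,A')·(Σ_{W,W'} (|W||W'|/(|A||A'|))·|d(W,W')/d(A,A') − 1|)²`. -/
theorem potential_defect {V : Type*} [Fintype V] [DecidableEq V] (G : SimpleGraph V)
    (A A' : Finset V) (P : Finpartition A) (P' : Finpartition A')
    (hd : dens G A A' ≠ 0) :
    (1 / 2) * dens G A A' *
        (∑ W ∈ P.parts, ∑ W' ∈ P'.parts,
          ((W.card : ℝ) * W'.card / ((A.card : ℝ) * A'.card)) *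
            |dens G W W' / dens G A A' - 1|) ^ 2 ≤
      pot G P P' - Hent (dens G A A') := by
  set d := dens G A A' with hdd
  have hdpos : 0 < d := (dens_nonneg G A A').lt_of_ne' hd
  -- `d ≠ 0` forces `A` and `A'` to be nonempty, as division by zero gives zero.
  have hA : (A.card : ℝ) * A'.card ≠ 0 := by
    intro h
    apply hd
    rw [hdd, _root_.dens, h, div_zero]
  unfold pot
  simp only [← Finset.sum_product']
  set w : Finset V × Finset V → ℝ :=
    fun q => (q.1.card : ℝ) * q.2.card / ((A.card : ℝ) * A'.card) with hwdef
  set x : Finset V × Finset V → ℝ := fun q => dens G q.1 q.2 / d with hxdef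
  have hw : ∀ q ∈ P.parts ×ˢ P'.parts, 0 ≤ w q := fun q _ => by positivity
  have hx : ∀ q ∈ P.parts ×ˢ P'.parts, 0 ≤ x q := fun q _ =>
    div_nonneg (dens_nonneg G _ _) hdpos.le
  have hw1 : ∑ q ∈ P.parts ×ˢ P'.parts, w q = 1 := by
    simp only [hwdef, ← Finset.sum_div, Finset.sum_product]
    rw [← Finset.sum_mul_sum, ← Nat.cast_sum,
      ← Nat.cast_sum, P.sum_card_parts, P'.sum_card_parts]
    exact div_self hA
  have hwx : ∑ q ∈ P.parts ×ˢ P'.parts, w q * x q = 1 := by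
    have hterm : ∀ q ∈ P.parts ×ˢ P'.parts,
        w q * x q = (eCnt G q.1 q.2 : ℝ) / ((A.card : ℝ) * A'.card) / d := by
      intro q hq
      rw [Finset.mem_product] at hq
      have h1 : (q.1.card : ℝ) ≠ 0 :=
        Nat.cast_ne_zero.mpr (P.nonempty_of_mem_parts hq.1).card_pos.ne'
      have h2 : (q.2.card : ℝ) ≠ 0 :=
        Nat.cast_ne_zero.mpr (P'.nonempty_of_mem_parts hq.2).card_pos.ne'
      simp only [hwdef, hxdef, _root_.dens]
      field_simp
    rw [Finset.sum_congr rfl hterm, ← Finset.sum_div, ← Finset.sum_div, ← Nat.cast_sum,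
      ← eCnt_finpartition]
    exact div_self hd
  have hpot : ∑ q ∈ P.parts ×ˢ P'.parts, w q * Hent (dens G q.1 q.2) =
      Hent d + d * ∑ q ∈ P.parts ×ˢ P'.parts, w q * (x q * Real.log (x q)) := by
    have hterm : ∀ q ∈ P.parts ×ˢ P'.parts, w q * Hent (dens G q.1 q.2) =
        w q * x q * Hent d + d * (w q * (x q * Real.log (x q))) := by
      intro q _
      have hq : dens G q.1 q.2 = d * x q := by
        simp only [hxdef]
        field_simp
      rw [hq, Hent_mul hd]
      ring
    rw [Finset.sum_congr rfl hterm, Finset.sum_add_distrib, ← Finset.sum_mul, ← Finset.mul_sum,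
      hwx, one_mul]
  have hpin := pinsker_weighted _ w x hw hx hw1 hwx
  change 1 / 2 * d * (∑ q ∈ P.parts ×ˢ P'.parts, w q * |x q - 1|) ^ 2 ≤
    ∑ q ∈ P.parts ×ˢ P'.parts, w q * Hent (dens G q.1 q.2) - Hent d
  rw [hpot]
  have := mul_le_mul_of_nonneg_left hpin hdpos.le
  linarith
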